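/- arXiv:1808.01289 — 2 statements merged into one kernel-verified Lean document; each statement's English description precedes it below -/
import Mathlib

section
/- Let p be a prime and N ≥ 2. Let B be the coordinate ring of GL_N over R₂, i.e. the localization of the polynomial ring R₂[x_{ij} : 1 ≤ i,j ≤ N] away from det(x), and let h ∈ B be an element with h ∉ pB. Let A be the localization of B away from h, let X = (X_{ij}) denote the image in A of the coordinate matrix (an invertible matrix over A), and let d : A → Ω_{A/R₂} be the universal derivation into the module of Kähler differentials. Then there exist NO ring endomorphism φ : A → A and matrix λ = (λ_{(i,j),(k,l)}) of size N²×N² with entries in R₂ such that simultaneously: (a) φ(r·1) = σ(r)·1 for every r ∈ R₂; (b) φ(a) − a^p ∈ pA for every a ∈ A; and (c) for all i,j, one has Σ_k (φ(X)⁻¹)_{ik} · d(φ(X_{kj})) = Σ_{k,l} (p·λ_{(i,j),(k,l)}) · ( Σ_m (X⁻¹)_{km} · d(X_{ml}) ) in Ω_{A/R₂}, where φ(X) is the (invertible) matrix with entries φ(X_{ij}). (This is the mod p² formulation of the statement that no nonempty open subset of GL_N over R admits a Frobenius lift on its p-adic completion that is Lie invariant mod p.) -/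
open MvPolynomial

set_option synthInstance.maxHeartbeats 2000000
set_option maxHeartbeats 2000000

/-- `R₂ = W(k)/p²W(k)`. -/
abbrev Rtwo (p : ℕ) [Fact p.Prime] (k : Type) [CommRing k] : Type :=
  WittVector p k ⧸ Ideal.span {((p : WittVector p k)) ^ 2}

/-- The endomorphism `σ` of `R₂` induced by the Witt vector Frobenius. -/
noncomputable def sigmaTwo (p : ℕ) [Fact p.Prime] (k : Type) [CommRing k] :
    Rtwo p k →+* Rtwo p k :=
  Ideal.quotientMap _ WittVector.frobenius (by
    rw [Ideal.span_singleton_le_iff_mem, Ideal.mem_comap, map_pow, map_natCast]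
    exact Ideal.subset_span rfl)

/-- `B`, the coordinate ring of `GL_N` over `R₂`: the localization of the polynomial ring
`R₂[x_{ij}]` away from `det x`. -/
abbrev glCoordRing (p : ℕ) [Fact p.Prime] (k : Type) [CommRing k] (N : ℕ) : Type :=
  Localization.Away
    ((Matrix.of fun i j : Fin N =>
        (X (i, j) : MvPolynomial (Fin N × Fin N) (Rtwo p k))).det)

/-- The image in `A` (the localization of `B` away from `h`) of the coordinate matrix. -/
noncomputable def glCoordMatrix (p : ℕ) [Fact p.Prime] (k : Type) [CommRing k] (N : ℕ)
    (h : glCoordRing p k N) : Matrix (Fin N) (Fin N) (Localization.Away h) :=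
  Matrix.of fun i j =>
    algebraMap (glCoordRing p k N) (Localization.Away h)
      (algebraMap (MvPolynomial (Fin N × Fin N) (Rtwo p k)) (glCoordRing p k N) (X (i, j)))

/-!
Let `F = φ(X)`. Contracting `F⁻¹ dF = p λ (X⁻¹ dX)` with a left invariant vector field `δ` gives
`δ F = p F v` for a constant matrix `v`. Hence brackets of left invariant fields kill `F`, because
`p² = 0`; in particular `E = [E_rr, E_rs]`, where `E X = X e_rs`, kills `F_rs = x_rs ^ p + p g`.
Now `p E ^ p` is again a derivation, and it vanishes since `E ^ 2` kills all coordinates. So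
applying `E ^ p` to `F_rs` leaves `p! (E x_rs) ^ p = p! x_rr ^ p = 0`, that is `p x_rr ^ p = 0`
by Wilson's theorem. But `A` is flat over `ℤ/p²` and `x_rr` is nonzero in the domain `A/pA`.
-/

open KaehlerDifferential (D)
open scoped KaehlerDifferential TensorProduct

section DerivationIterates

open scoped Nat

variable {R A : Type*} [CommRing R] [CommRing A] [Algebra R A] (δ : Derivation R A A)

theorem derivation_iterate_mul_of_apply_eq_zero {w : A} (hw : δ w = 0) (n : ℕ) (x : A) :
    δ^[n] (w * x) = w * δ^[n] x := by
  have hcomm : Function.Semiconj (w * ·) δ δ := fun x => by simp [hw]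
  exact (hcomm.iterate_right n x).symm

theorem derivation_iterate_pow_self {y : A} (hy : δ (δ y) = 0) (n : ℕ) :
    δ^[n] (y ^ n) = n ! * δ y ^ n := by
  induction n with
  | zero => simp
  | succ n ih =>
    have hconst : δ ((n + 1 : ℕ) * δ y) = 0 := by simp [hy]
    have hpow : δ (y ^ (n + 1)) = (n + 1 : ℕ) * δ y * y ^ n := by
      rw [δ.leibniz_pow, Nat.add_sub_cancel, nsmul_eq_mul, smul_eq_mul]
      ring
    rw [Function.iterate_succ_apply, hpow, derivation_iterate_mul_of_apply_eq_zero δ hconst, ih,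
      Nat.factorial_succ, Nat.cast_mul]
    ring

/-- Multiplication intertwines `δ` with the sum of the commuting operators `δ ⊗ 1` and `1 ⊗ δ` on
`A ⊗ A`, so this is the binomial formula for `(δ ⊗ 1 + 1 ⊗ δ) ^ p` modulo `p`. -/
theorem exists_derivation_iterate_prime_mul {p : ℕ} (hp : p.Prime) (x y : A) :
    ∃ r : A, δ^[p] (x * y) = x * δ^[p] y + y * δ^[p] x + p * r := by
  let L : Module.End R (A ⊗[R] A) := LinearMap.rTensor A δ
  let M : Module.End R (A ⊗[R] A) := LinearMap.lTensor A δ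
  have hLM : Commute L M :=
    (LinearMap.rTensor_comp_lTensor _ _ _).trans (LinearMap.lTensor_comp_rTensor _ _ _).symm
  let μ : A ⊗[R] A →ₐ[R] A := Algebra.TensorProduct.lmul' R
  have hμ : Function.Semiconj μ ⇑(L + M) δ := fun t => by
    induction t with
    | zero => simp
    | add s t hs ht => simp only [map_add, hs, ht]
    | tmul a b => simp [L, M, μ, mul_comm, add_comm]
  obtain ⟨N, hN⟩ := hLM.exists_add_pow_prime_eq hp
  refine ⟨μ ((L * M * N) (x ⊗ₜ y)), ?_⟩
  have hxy : μ (x ⊗ₜ y) = x * y := Algebra.TensorProduct.lmul'_apply_tmul x y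
  rw [← hxy, ← hμ.iterate_right, ← Module.End.pow_apply, hN, LinearMap.rTensor_pow,
    LinearMap.lTensor_pow]
  simp [μ, Module.End.pow_apply, mul_comm, add_comm]

/-- The derivation `c δᵖ`, for `c` killed by the prime `p`. For `c = 1` in characteristic `p` it is
the `p`-th power operation on derivations; in a ring killed by `p²` one takes `c = p`. -/
def derivationMulIteratePrime {p : ℕ} (hp : p.Prime) {c : A} (hc : c * p = 0) :
    Derivation R A A :=
  Derivation.mk' (c • (δ : A →ₗ[R] A) ^ p) fun x y => by
    obtain ⟨r, hr⟩ := exists_derivation_iterate_prime_mul δ hp x y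
    simp only [LinearMap.smul_apply, Module.End.pow_apply, Derivation.coeFn_coe, smul_eq_mul, hr]
    linear_combination r * hc

theorem derivationMulIteratePrime_apply {p : ℕ} (hp : p.Prime) {c : A} (hc : c * p = 0) (x : A) :
    derivationMulIteratePrime δ hp hc x = c * δ^[p] x := by
  simp [derivationMulIteratePrime, Module.End.pow_apply]

theorem natCast_mul_eq_zero_of_factorial_mul_eq_zero {p : ℕ} (hp : p.Prime)
    (hp2 : (p : A) * p = 0) {a : A} (ha : (p ! : A) * a = 0) : (p : A) * a = 0 := by
  have : Fact p.Prime := ⟨hp⟩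
  obtain ⟨m, hm⟩ : p ∣ (p - 1)! + 1 := by
    rw [← CharP.cast_eq_zero_iff (ZMod p), Nat.cast_succ, ZMod.wilsons_lemma, neg_add_cancel]
  have hwilson : (((p - 1)! : ℕ) : A) + 1 = p * m := mod_cast congrArg (Nat.cast (R := A)) hm
  rw [← Nat.mul_factorial_pred hp.ne_zero, Nat.cast_mul] at ha
  linear_combination p * a * hwilson + m * a * hp2 - ha

/-- `δᵖ` sends `yᵖ + p g` to `p! (δ y)ᵖ + p (δᵖ g)`, where the last term vanishes. -/
theorem natCast_mul_apply_pow_prime_eq_zero {p : ℕ} (hp : p.Prime) (hp2 : (p : A) * p = 0)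
    (hδp : ∀ a, (p : A) * δ^[p] a = 0) {y f : A} (hy : δ (δ y) = 0) (hf : δ f = 0)
    (hfy : f - y ^ p ∈ Ideal.span {(p : A)}) : (p : A) * δ y ^ p = 0 := by
  obtain ⟨g, hg⟩ := Ideal.mem_span_singleton.1 hfy
  refine natCast_mul_eq_zero_of_factorial_mul_eq_zero hp hp2 ?_
  have hiterate : δ^[p] f = p * δ^[p] g + p ! * δ y ^ p := by
    rw [sub_eq_iff_eq_add.1 hg, iterate_map_add, derivation_iterate_pow_self δ hy,
      derivation_iterate_mul_of_apply_eq_zero δ (by simp)]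
  have hzero : δ^[p] f = 0 := by
    rw [← Nat.succ_pred hp.ne_zero, Function.iterate_succ_apply, hf, iterate_map_zero]
  rwa [hzero, hδp, zero_add, eq_comm] at hiterate

end DerivationIterates

section KaehlerBasis

variable {R A ι : Type*} [CommRing R] [CommRing A] [Algebra R A]

/-- The differentials of the coordinates form a basis of the Kähler differentials of a formally
étale algebra over a polynomial ring. -/
noncomputable def kaehlerBasisOfFormallyEtale (R ι A : Type*) [CommRing R] [CommRing A]
    [Algebra R A] [Algebra (MvPolynomial ι R) A] [IsScalarTower R (MvPolynomial ι R) A]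
    [Algebra.FormallyEtale (MvPolynomial ι R) A] : Module.Basis ι A Ω[A⁄R] :=
  ((KaehlerDifferential.mvPolynomialBasis R ι).baseChange A).map
    (KaehlerDifferential.tensorKaehlerEquivOfFormallyEtale R (MvPolynomial ι R) A)

theorem kaehlerBasisOfFormallyEtale_apply [Algebra (MvPolynomial ι R) A]
    [IsScalarTower R (MvPolynomial ι R) A] [Algebra.FormallyEtale (MvPolynomial ι R) A] (i : ι) :
    kaehlerBasisOfFormallyEtale R ι A i = D R A (algebraMap (MvPolynomial ι R) A (X i)) := by
  simp [kaehlerBasisOfFormallyEtale]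

variable {x : ι → A} (b : Module.Basis ι A Ω[A⁄R]) (hb : ∀ i, b i = D R A (x i))
include hb

theorem exists_derivation_of_kaehlerBasis (y : ι → A) :
    ∃ δ : Derivation R A A, ∀ i, δ (x i) = y i :=
  ⟨(b.constr A y).compDer (D R A), fun i => by simp [← hb]⟩

theorem derivation_eq_zero_of_kaehlerBasis (δ : Derivation R A A) (hδ : ∀ i, δ (x i) = 0) :
    δ = 0 := by
  have hlift : δ.liftKaehlerDifferential = 0 := b.ext fun i => by simp [hb, hδ]
  rw [← δ.liftKaehlerDifferential_comp, hlift]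
  rfl

theorem mul_iterate_prime_eq_zero_of_kaehlerBasis {p : ℕ} (hp : p.Prime) {c : A} (hc : c * p = 0)
    {δ : Derivation R A A} (hδ : ∀ i, δ (δ (x i)) = 0) (a : A) : c * δ^[p] a = 0 := by
  have hzero : derivationMulIteratePrime δ hp hc = 0 :=
    derivation_eq_zero_of_kaehlerBasis b hb _ fun i => by
      obtain ⟨q, rfl⟩ := Nat.exists_eq_add_of_le' hp.two_le
      rw [derivationMulIteratePrime_apply, Function.iterate_add_apply]
      change c * δ^[q] (δ (δ (x i))) = 0
      rw [hδ, Function.iterate_fixed (map_zero δ), mul_zero]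
  rw [← derivationMulIteratePrime_apply δ hp hc, hzero, Derivation.zero_apply]

end KaehlerBasis

section LeftInvariant

variable {R A n : Type*} [CommRing R] [CommRing A] [Algebra R A] [Fintype n]

/-- `δ` is, in the coordinates `Y`, the left invariant vector field on `GL_n` attached to the
constant matrix `u`: it satisfies `δ Y = Y u` entrywise. -/
def IsLeftInvariantField (Y : Matrix n n A) (u : Matrix n n R) (δ : Derivation R A A) : Prop :=
  Y.map δ = Y * u.map (algebraMap R A)

theorem matrix_mul_map_algebraMap_map_derivation (δ : Derivation R A A) (Y : Matrix n n A)
    (u : Matrix n n R) :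
    (Y * u.map (algebraMap R A)).map δ = Y.map δ * u.map (algebraMap R A) := by
  ext i j
  simp [Matrix.mul_apply, mul_comm]

namespace IsLeftInvariantField

variable {Y : Matrix n n A} {u v : Matrix n n R} {δ ε : Derivation R A A}

theorem apply_apply (hδ : IsLeftInvariantField Y u δ) (hε : IsLeftInvariantField Y v ε) (i j : n) :
    δ (ε (Y i j)) = (Y * (u * v).map (algebraMap R A)) i j := by
  have hmap : (Y.map ε).map δ = Y * (u * v).map (algebraMap R A) := by
    rw [hε, matrix_mul_map_algebraMap_map_derivation, hδ, Matrix.mul_assoc, Matrix.map_mul]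
  exact congrFun₂ hmap i j

theorem lie (hδ : IsLeftInvariantField Y u δ) (hε : IsLeftInvariantField Y v ε) :
    IsLeftInvariantField Y (u * v - v * u) ⁅δ, ε⁆ := by
  ext i j
  rw [Matrix.map_sub _ (map_sub _), Matrix.mul_sub, Matrix.sub_apply, ← hδ.apply_apply hε,
    ← hε.apply_apply hδ, Matrix.map_apply, Derivation.commutator_apply]

end IsLeftInvariantField

end LeftInvariant

section LieInvariant

variable {R A n : Type*} [CommRing R] [CommRing A] [Algebra R A] [Fintype n]

/-- The Maurer–Cartan form `Y⁻¹ dY`, as a matrix of differentials; the inverse of `Y` is passed as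
the separate argument `Yinv`. -/
noncomputable def maurerCartan (R : Type*) [CommRing R] [Algebra R A] (Yinv Y : Matrix n n A) :
    Matrix n n Ω[A⁄R] :=
  Matrix.of fun i j => ∑ m, Yinv i m • D R A (Y m j)

theorem liftKaehlerDifferential_maurerCartan (δ : Derivation R A A) (Yinv Y : Matrix n n A)
    (i j : n) : δ.liftKaehlerDifferential (maurerCartan R Yinv Y i j) = (Yinv * Y.map δ) i j := by
  simp [maurerCartan, Matrix.mul_apply]

/-- The pullback `F⁻¹ dF` of the Maurer–Cartan form is `c λ` times `X⁻¹ dX`, for the constant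
matrix `λ`. Lie invariance mod `p` is the case `c = p` over a ring killed by `p²`. -/
def IsLieInvariant (c : R) (lam : n × n → n × n → R) (X Xinv F Finv : Matrix n n A) : Prop :=
  ∀ i j, maurerCartan R Finv F i j =
    ∑ s, ∑ l, algebraMap R A (c * lam (i, j) (s, l)) • maurerCartan R Xinv X s l

variable [DecidableEq n] {c : R} {lam : n × n → n × n → R} {X Xinv F Finv : Matrix n n A}

theorem IsLieInvariant.exists_isLeftInvariantField (hLie : IsLieInvariant c lam X Xinv F Finv)
    (hX : Xinv * X = 1) (hF : F * Finv = 1) {u : Matrix n n R} {δ : Derivation R A A}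
    (hδ : IsLeftInvariantField X u δ) :
    ∃ v : Matrix n n R, IsLeftInvariantField F (c • v) δ := by
  let v : Matrix n n R := Matrix.of fun i j => ∑ s, ∑ l, lam (i, j) (s, l) * u s l
  have hωX : Xinv * X.map δ = u.map (algebraMap R A) := by
    rw [hδ, ← Matrix.mul_assoc, hX, Matrix.one_mul]
  have hωF : Finv * F.map δ = (c • v).map (algebraMap R A) := by
    ext i j
    rw [← liftKaehlerDifferential_maurerCartan, hLie]
    simp [liftKaehlerDifferential_maurerCartan, hωX, v, Finset.mul_sum, mul_assoc]
  exact ⟨v, by rw [IsLeftInvariantField, ← hωF, ← Matrix.mul_assoc, hF, Matrix.one_mul]⟩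

/-- Left invariant fields act on `F` through multiples of `c`, so their brackets act through
multiples of `c ^ 2`. -/
theorem IsLieInvariant.lie_apply_eq_zero (hLie : IsLieInvariant c lam X Xinv F Finv)
    (hc : c * c = 0) (hX : Xinv * X = 1) (hF : F * Finv = 1) {u v : Matrix n n R}
    {δ ε : Derivation R A A} (hδ : IsLeftInvariantField X u δ) (hε : IsLeftInvariantField X v ε)
    (i j : n) : ⁅δ, ε⁆ (F i j) = 0 := by
  obtain ⟨u', hu'⟩ := hLie.exists_isLeftInvariantField hX hF hδ
  obtain ⟨v', hv'⟩ := hLie.exists_isLeftInvariantField hX hF hε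
  have hzero : IsLeftInvariantField F (0 : Matrix n n R) ⁅δ, ε⁆ := by
    simpa [smul_smul, hc] using hu'.lie hv'
  simpa using congrFun₂ hzero i j

theorem IsLieInvariant.natCast_mul_diag_pow_prime_eq_zero {p : ℕ} (hp : p.Prime)
    (hLie : IsLieInvariant (p : R) lam X Xinv F Finv) (hp2 : (p : R) * p = 0)
    (b : Module.Basis (n × n) A Ω[A⁄R]) (hb : ∀ ij, b ij = D R A (X ij.1 ij.2))
    (hX : Xinv * X = 1) (hF : F * Finv = 1)
    (hFX : ∀ i j, F i j - X i j ^ p ∈ Ideal.span {(p : A)}) {r s : n} (hrs : r ≠ s) :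
    (p : A) * X r r ^ p = 0 := by
  have hfield (u : Matrix n n R) : ∃ δ, IsLeftInvariantField X u δ := by
    obtain ⟨δ, hδ⟩ := exists_derivation_of_kaehlerBasis b hb
      fun ij => (X * u.map (algebraMap R A)) ij.1 ij.2
    exact ⟨δ, Matrix.ext fun i j => hδ (i, j)⟩
  obtain ⟨δ, hδ⟩ := hfield (.single r r 1)
  obtain ⟨ε, hε⟩ := hfield (.single r s 1)
  have hlie : IsLeftInvariantField X (.single r s 1) ⁅δ, ε⁆ := by
    simpa [hrs.symm] using hδ.lie hε
  have hsq (i j : n) : ⁅δ, ε⁆ (⁅δ, ε⁆ (X i j)) = 0 := by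
    simpa [hrs.symm] using hlie.apply_apply hlie i j
  have hXrs : ⁅δ, ε⁆ (X r s) = X r r := by
    simpa using congrFun₂ hlie r s
  have hp2A : (p : A) * p = 0 := by simpa using congrArg (algebraMap R A) hp2
  rw [← hXrs]
  exact natCast_mul_apply_pow_prime_eq_zero _ hp hp2A
    (mul_iterate_prime_eq_zero_of_kaehlerBasis b hb hp hp2A fun ij => hsq ij.1 ij.2)
    (hsq r s) (hLie.lie_apply_eq_zero hp2 hX hF hδ hε r s) (hFX r s)

end LieInvariant

section FlatPrime

/-- A prime element `c` such that every element killed by `c` is a multiple of `c`. When `c` is a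
prime number `p` with `p² = 0` in `A`, this says that `A` is flat over `ℤ/p²` and that `A/pA` is a
domain. -/
structure IsFlatPrime {A : Type*} [CommRing A] (c : A) : Prop where
  prime : Prime c
  dvd_of_mul_eq_zero {a : A} : c * a = 0 → c ∣ a

variable {A : Type*} [CommRing A] {c : A}

theorem IsFlatPrime.of_isPrime_span (hprime : (Ideal.span {c}).IsPrime)
    (hflat : ∀ a, c * a = 0 → c ∣ a) : IsFlatPrime c where
  prime := (Ideal.span_singleton_prime fun hc => hprime.one_notMem
    (Ideal.mem_span_singleton.2 (hflat 1 (by rw [hc, zero_mul])))).1 hprime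
  dvd_of_mul_eq_zero := hflat _

theorem isFlatPrime_quotient_sq [IsDomain A] (hc : Prime c) :
    IsFlatPrime (Ideal.Quotient.mk (Ideal.span {c ^ 2}) c) := by
  have hle : Ideal.span {c ^ 2} ≤ Ideal.span {c} :=
    Ideal.span_singleton_le_span_singleton.2 (dvd_pow_self c two_ne_zero)
  have := (Ideal.span_singleton_prime hc.ne_zero).2 hc
  refine .of_isPrime_span ?_ fun a ha => ?_
  · rw [← Set.image_singleton (f := Ideal.Quotient.mk _), ← Ideal.map_span]
    exact Ideal.map_isPrime_of_surjective Ideal.Quotient.mk_surjective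
      (Ideal.mk_ker.trans_le hle)
  · obtain ⟨a, rfl⟩ := Ideal.Quotient.mk_surjective a
    rw [← map_mul, Ideal.Quotient.eq_zero_iff_dvd, sq] at ha
    exact map_dvd _ ((mul_dvd_mul_iff_left hc.ne_zero).1 ha)

theorem IsFlatPrime.mvPolynomial_C (hc : IsFlatPrime c) (σ : Type*) :
    IsFlatPrime (C c : MvPolynomial σ A) where
  prime := (MvPolynomial.prime_C_iff σ).2 hc.prime
  dvd_of_mul_eq_zero {f} hf := (C_dvd_iff_dvd_coeff c f).2 fun m =>
    hc.dvd_of_mul_eq_zero (by rw [← coeff_C_mul, hf, coeff_zero])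

theorem IsFlatPrime.mul_pow_ne_zero (hc : IsFlatPrime c) {a : A} (ha : ¬ c ∣ a) (n : ℕ) :
    c * a ^ n ≠ 0 := fun hzero =>
  ha (hc.prime.dvd_of_dvd_pow (hc.dvd_of_mul_eq_zero hzero))

theorem not_C_dvd_of_eval_eq_one (hc : ¬ IsUnit c) {σ : Type*} {f : MvPolynomial σ A}
    {x : σ → A} (hf : eval x f = 1) : ¬ C c ∣ f := fun hdvd =>
  hc (isUnit_of_dvd_one (by simpa [hf] using map_dvd (eval x) hdvd))

theorem not_dvd_of_mem_powers (hc : Prime c) {d : A} (hd : ¬ c ∣ d) :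
    ∀ s ∈ Submonoid.powers d, ¬ c ∣ s := by
  rintro _ ⟨m, rfl⟩ hdvd
  exact hd (hc.dvd_of_dvd_pow hdvd)

variable (S : Submonoid A) (B : Type*) [CommRing B] [Algebra A B] [IsLocalization S B]

theorem disjoint_span_singleton (hS : ∀ s ∈ S, ¬ c ∣ s) :
    Disjoint (S : Set A) (Ideal.span {c} : Ideal A) :=
  Set.disjoint_left.2 fun s hs hcs => hS s hs (Ideal.mem_span_singleton.1 hcs)

theorem algebraMap_dvd_algebraMap_iff_of_prime (hc : Prime c) (hS : ∀ s ∈ S, ¬ c ∣ s)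
    {a : A} : algebraMap A B c ∣ algebraMap A B a ↔ c ∣ a := by
  have hprime := (Ideal.span_singleton_prime hc.ne_zero).2 hc
  have hunder := IsLocalization.under_map_of_isPrime_disjoint S B hprime
    (disjoint_span_singleton S hS)
  rw [← Ideal.mem_span_singleton, ← Ideal.mem_span_singleton, ← Set.image_singleton,
    ← Ideal.map_span, ← Ideal.mem_comap]
  exact Ideal.ext_iff.1 hunder a

theorem IsFlatPrime.algebraMap (hc : IsFlatPrime c) (hS : ∀ s ∈ S, ¬ c ∣ s) :
    IsFlatPrime (algebraMap A B c) := by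
  refine .of_isPrime_span ?_ fun b hb => ?_
  · rw [← Set.image_singleton, ← Ideal.map_span]
    exact IsLocalization.isPrime_of_isPrime_disjoint S B _
      ((Ideal.span_singleton_prime hc.prime.ne_zero).2 hc.prime) (disjoint_span_singleton S hS)
  · obtain ⟨a, s, rfl⟩ := IsLocalization.exists_mk'_eq S b
    rw [IsLocalization.mul_mk'_eq_mk'_of_mul, IsLocalization.mk'_eq_zero_iff] at hb
    obtain ⟨t, ht⟩ := hb
    have hcta : c ∣ t * a := hc.dvd_of_mul_eq_zero (by rw [mul_left_comm, ht])
    obtain ⟨a, rfl⟩ := (hc.prime.dvd_or_dvd hcta).resolve_left (hS t t.2)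
    exact ⟨IsLocalization.mk' B a s, (IsLocalization.mul_mk'_eq_mk'_of_mul ..).symm⟩

section Away

variable {q : ℕ} {d : A}

theorem IsFlatPrime.natCast_away (hq : IsFlatPrime (q : A)) (hd : ¬ (q : A) ∣ d) :
    IsFlatPrime (q : Localization.Away d) := by
  simpa using hq.algebraMap (.powers d) (Localization.Away d) (not_dvd_of_mem_powers hq.prime hd)

theorem natCast_dvd_algebraMap_away_iff (hq : Prime (q : A)) (hd : ¬ (q : A) ∣ d) {a : A} :
    (q : Localization.Away d) ∣ algebraMap A (Localization.Away d) a ↔ (q : A) ∣ a := by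
  simpa using algebraMap_dvd_algebraMap_iff_of_prime (.powers d) (Localization.Away d) hq
    (not_dvd_of_mem_powers hq hd)

end Away

end FlatPrime

section WittVector

variable (p : ℕ) [Fact p.Prime] (k : Type) [CommRing k]

theorem natCast_mul_self_Rtwo : (p : Rtwo p k) * p = 0 := by
  rw [← map_natCast (Ideal.Quotient.mk _), ← sq, ← map_pow]
  exact Ideal.Quotient.mk_singleton_self _

variable [IsDomain k] [CharP k p] [PerfectRing k p]

theorem prime_natCast_wittVector : Prime (p : WittVector p k) := by
  rw [← Ideal.span_singleton_prime (WittVector.p_nonzero p k), ← WittVector.ker_constantCoeff]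
  exact RingHom.ker_isPrime _

theorem isFlatPrime_natCast_Rtwo : IsFlatPrime (p : Rtwo p k) := by
  simpa using isFlatPrime_quotient_sq (prime_natCast_wittVector p k)

end WittVector

section Coordinates

variable {p : ℕ} [Fact p.Prime] {k : Type} [CommRing k] {N : ℕ} (h : glCoordRing p k N)

theorem exists_kaehlerBasis_glCoordMatrix :
    ∃ b : Module.Basis (Fin N × Fin N) (Localization.Away h) Ω[Localization.Away h⁄Rtwo p k],
      ∀ ij, b ij = D _ _ (glCoordMatrix p k N h ij.1 ij.2) := by
  let P := MvPolynomial (Fin N × Fin N) (Rtwo p k)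
  have : Algebra.FormallyEtale P (glCoordRing p k N) :=
    .of_isLocalization (Submonoid.powers (Matrix.of fun i j => (X (i, j) : P)).det)
  have : Algebra.FormallyEtale (glCoordRing p k N) (Localization.Away h) :=
    .of_isLocalization (Submonoid.powers h)
  have : Algebra.FormallyEtale P (Localization.Away h) := .comp P (glCoordRing p k N) _
  exact ⟨kaehlerBasisOfFormallyEtale _ _ _, kaehlerBasisOfFormallyEtale_apply⟩

theorem eval_one_det_coordinates (R n : Type*) [CommRing R] [Fintype n] [DecidableEq n] :
    eval (fun ij : n × n => (1 : Matrix n n R) ij.1 ij.2)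
      (Matrix.of fun i j => (X (i, j) : MvPolynomial (n × n) R)).det = 1 := by
  rw [RingHom.map_det, ← Matrix.det_one (n := n)]
  congr 1
  ext i j
  simp

variable [IsDomain k] [CharP k p] [PerfectRing k p]

variable (p k) in
theorem isFlatPrime_natCast_mvPolynomial_Rtwo (σ : Type*) :
    IsFlatPrime (p : MvPolynomial σ (Rtwo p k)) := by
  simpa using (isFlatPrime_natCast_Rtwo p k).mvPolynomial_C σ

theorem not_natCast_dvd_mvPolynomial_Rtwo {σ : Type*} {f : MvPolynomial σ (Rtwo p k)}
    {x : σ → Rtwo p k} (hf : eval x f = 1) : ¬ (p : MvPolynomial σ (Rtwo p k)) ∣ f := by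
  simpa using not_C_dvd_of_eval_eq_one (isFlatPrime_natCast_Rtwo p k).prime.not_isUnit hf

variable (p k N) in
theorem isFlatPrime_natCast_glCoordRing : IsFlatPrime (p : glCoordRing p k N) :=
  (isFlatPrime_natCast_mvPolynomial_Rtwo p k _).natCast_away
    (not_natCast_dvd_mvPolynomial_Rtwo (eval_one_det_coordinates _ _))

theorem not_natCast_dvd_glCoordMatrix (hh : h ∉ Ideal.span {(p : glCoordRing p k N)})
    (i j : Fin N) : ¬ (p : Localization.Away h) ∣ glCoordMatrix p k N h i j := by
  rw [glCoordMatrix, Matrix.of_apply,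
    natCast_dvd_algebraMap_away_iff (isFlatPrime_natCast_glCoordRing p k N).prime
      (hh ∘ Ideal.mem_span_singleton.2),
    natCast_dvd_algebraMap_away_iff (isFlatPrime_natCast_mvPolynomial_Rtwo p k _).prime
      (not_natCast_dvd_mvPolynomial_Rtwo (eval_one_det_coordinates _ _))]
  exact not_natCast_dvd_mvPolynomial_Rtwo (x := 1) (by simp)

theorem natCast_mul_glCoordMatrix_pow_ne_zero (hh : h ∉ Ideal.span {(p : glCoordRing p k N)})
    (i j : Fin N) (m : ℕ) : (p : Localization.Away h) * glCoordMatrix p k N h i j ^ m ≠ 0 :=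
  ((isFlatPrime_natCast_glCoordRing p k N).natCast_away
    (hh ∘ Ideal.mem_span_singleton.2)).mul_pow_ne_zero (not_natCast_dvd_glCoordMatrix h hh i j) m

theorem no_lie_invariant_frobenius_lift_GL_general (hN : 2 ≤ N)
    (hh : h ∉ Ideal.span {(p : glCoordRing p k N)}) :
    ¬ ∃ (lam : Fin N × Fin N → Fin N × Fin N → Rtwo p k)
        (Xinv F Finv : Matrix (Fin N) (Fin N) (Localization.Away h)),
      Xinv * glCoordMatrix p k N h = 1 ∧ F * Finv = 1 ∧
      (∀ i j, F i j - glCoordMatrix p k N h i j ^ p ∈ Ideal.span {(p : Localization.Away h)}) ∧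
      IsLieInvariant (p : Rtwo p k) lam (glCoordMatrix p k N h) Xinv F Finv := by
  rintro ⟨lam, Xinv, F, Finv, hX, hF, hFX, hLie⟩
  obtain ⟨b, hb⟩ := exists_kaehlerBasis_glCoordMatrix h
  have hne : (⟨0, by omega⟩ : Fin N) ≠ ⟨1, by omega⟩ := by simp
  exact natCast_mul_glCoordMatrix_pow_ne_zero h hh _ _ p
    (hLie.natCast_mul_diag_pow_prime_eq_zero Fact.out (natCast_mul_self_Rtwo p k) b hb hX hF
      hFX hne)

end Coordinates

/-- There is no Frobenius lift on any basic open of `GL_N` over `R₂` that is Lie invariant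
mod `p` (i.e. whose action on the invariant forms, divided by `p`, is given by a matrix `λ`
over `R₂` multiplied by `p`, in the mod-`p²` formulation). -/
theorem no_lie_invariant_frobenius_lift_GL (p : ℕ) [Fact p.Prime]
    (k : Type) [Field k] [IsAlgClosed k] [CharP k p]
    (N : ℕ) (hN : 2 ≤ N)
    (h : glCoordRing p k N) (hh : h ∉ Ideal.span {(p : glCoordRing p k N)}) :
    ¬ ∃ (φ : Localization.Away h →+* Localization.Away h)
        (lam : (Fin N × Fin N) → (Fin N × Fin N) → Rtwo p k)
        (Xinv Finv : Matrix (Fin N) (Fin N) (Localization.Away h)),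
      -- `Xinv` is the inverse of the coordinate matrix `X`
      glCoordMatrix p k N h * Xinv = 1 ∧ Xinv * glCoordMatrix p k N h = 1 ∧
      -- `Finv` is the inverse of the matrix `φ(X)`
      (glCoordMatrix p k N h).map φ * Finv = 1 ∧ Finv * (glCoordMatrix p k N h).map φ = 1 ∧
      -- (a) `φ` lifts `σ` on `R₂`
      (∀ r : Rtwo p k,
        φ (algebraMap (Rtwo p k) (Localization.Away h) r) =
          algebraMap (Rtwo p k) (Localization.Away h) (sigmaTwo p k r)) ∧
      -- (b) `φ` is a Frobenius lift
      (∀ a : Localization.Away h, φ a - a ^ p ∈ Ideal.span {(p : Localization.Away h)}) ∧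
      -- (c) Lie invariance mod `p` (formulated mod `p²`)
      (∀ i j : Fin N,
        ∑ s : Fin N, Finv i s •
            KaehlerDifferential.D (Rtwo p k) (Localization.Away h)
              (φ (glCoordMatrix p k N h s j)) =
          ∑ s : Fin N, ∑ l : Fin N,
            algebraMap (Rtwo p k) (Localization.Away h) ((p : Rtwo p k) * lam (i, j) (s, l)) •
              (∑ m : Fin N, Xinv s m •
                KaehlerDifferential.D (Rtwo p k) (Localization.Away h)
                  (glCoordMatrix p k N h m l))) := by
  rintro ⟨φ, lam, Xinv, Finv, -, hX, hF, -, -, hφ, hLie⟩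
  exact no_lie_invariant_frobenius_lift_GL_general h hN hh
    ⟨lam, Xinv, (glCoordMatrix p k N h).map φ, Finv, hX, hF, fun _ _ => hφ _, hLie⟩
end

section
/- Let p be a prime and N ≥ 2. Let u be an N×N matrix over R with u ≠ 1 and (u−1)^p = 0. Then there exist an integer e ≥ 0, an invertible N×N matrix v over R, and an N×N matrix E(t) with entries in the polynomial ring R[t], such that: (i) evaluating E at t = 0 gives the identity matrix; (ii) the one-parameter group identity holds: in matrices over the two-variable polynomial ring R[s,t], the matrix obtained from E by substituting s+t for t equals the product of the matrices obtained by substituting s and t respectively; (iii) evaluating E at t = p^e gives v·u·v⁻¹; and (iv) modulo p one has the block form E ≡ [[1₂ + t·ν₂, *],[0, *]]: the polynomials E_{11} − 1, E_{22} − 1, E_{21}, E_{12} − t all lie in p·R[t], and for every index i ≥ 3 the polynomials E_{i1} and E_{i2} lie in p·R[t]. -/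
open MvPolynomial

/-!
Since `(u - 1) ^ p = 0` and `(p - 1)!` is invertible, the exponential polynomial truncated in degree
`p` can be solved for its argument: there is a matrix `X` with `X ^ p = 0` and `exp X = u`. As
`X ≠ 0`, we may write `X = p ^ e • Z` with `Z` nonzero modulo `p`, and `Z` is still nilpotent. So
over the residue field some vector `w` satisfies `Z w ≠ 0` and `Z² w = 0`; completing `Z w, w` to a
basis and lifting the change of basis to an invertible `v` over `R` makes the first two columns of
`Y = v Z v⁻¹` congruent to `0` and to the first basis vector. Then `E(t) = exp (t Y)` is polynomial
in `t`, it satisfies `E(s + t) = E(s) E(t)` because `Y ^ p = 0`, its value at `p ^ e` is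
`v (exp X) v⁻¹ = v u v⁻¹`, and modulo `p` its first two columns are those of `1 + t Y`.
-/

open scoped Matrix MatrixGroups Nat Polynomial

section PolynomialEquation

variable {R : Type*} [CommRing R]

theorem exists_isNilpotent_and_aeval_eq {S : Type*} [CommRing S] [Algebra R S] {f : R[X]}
    (hf₀ : f.coeff 0 = 0) (hf₁ : IsUnit (f.coeff 1)) {y : S} (hy : IsNilpotent y) :
    ∃ x : S, IsNilpotent x ∧ Polynomial.aeval x f = y := by
  let P : S[X] := f.map (algebraMap R S) - Polynomial.C y
  have hP : IsNilpotent (Polynomial.aeval (0 : S) P) := by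
    simpa [P, ← Polynomial.coeff_zero_eq_aeval_zero', hf₀] using hy
  have hP' : IsUnit (Polynomial.aeval (0 : S) (Polynomial.derivative P)) := by
    simpa [P, ← Polynomial.coeff_zero_eq_aeval_zero', Polynomial.coeff_derivative]
      using hf₁.map (algebraMap R S)
  obtain ⟨x, ⟨hx, hPx⟩, -⟩ := Polynomial.existsUnique_nilpotent_sub_and_aeval_eq_zero hP hP'
  refine ⟨x, by simpa using hx, ?_⟩
  simpa [P, sub_eq_zero] using hPx

theorem pow_aeval_eq_zero_iff {S : Type*} [CommRing S] [Algebra R S] {f : R[X]}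
    (hf₀ : f.coeff 0 = 0) (hf₁ : IsUnit (f.coeff 1)) {x : S} (hx : IsNilpotent x) (d : ℕ) :
    Polynomial.aeval x f ^ d = 0 ↔ x ^ d = 0 := by
  have hunit : IsUnit (Polynomial.aeval x f.divX) := by
    refine Polynomial.isUnit_aeval_of_isUnit_aeval_of_isNilpotent_sub (b := 0) ?_
      (by rwa [sub_zero])
    rw [← Polynomial.coeff_zero_eq_aeval_zero', Polynomial.coeff_divX]
    exact hf₁.map (algebraMap R S)
  rw [← Polynomial.divX_mul_X_add f, hf₀, Polynomial.C_0, add_zero, map_mul, Polynomial.aeval_X,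
    mul_pow, (hunit.pow d).mul_right_eq_zero]

open scoped IsMulCommutative in
theorem exists_pow_eq_zero_and_aeval_eq {A : Type*} [Ring A] [Algebra R A] {f : R[X]}
    (hf₀ : f.coeff 0 = 0) (hf₁ : IsUnit (f.coeff 1)) {y : A} {d : ℕ} (hy : y ^ d = 0) :
    ∃ x : A, x ^ d = 0 ∧ Polynomial.aeval x f = y := by
  -- The equation is solved in the commutative subalgebra `R[y]`, where Newton's method applies.
  let y' : Algebra.adjoin R {y} := ⟨y, Algebra.self_mem_adjoin_singleton R y⟩
  have hy' : y' ^ d = 0 := Subtype.ext hy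
  obtain ⟨x, hx, hxy⟩ := exists_isNilpotent_and_aeval_eq hf₀ hf₁ ⟨d, hy'⟩
  rw [← hxy, pow_aeval_eq_zero_iff hf₀ hf₁ hx] at hy'
  exact ⟨x, congrArg Subtype.val hy',
    (Polynomial.aeval_algHom_apply (Algebra.adjoin R {y}).val x f).trans (congrArg Subtype.val hxy)⟩

theorem aeval_units_conj {A : Type*} [Ring A] [Algebra R A] (v : Aˣ) (x : A) (f : R[X]) :
    Polynomial.aeval (v * x * ↑v⁻¹ : A) f = v * Polynomial.aeval x f * ↑v⁻¹ := by
  simpa [ConjAct.units_smul_def] using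
    Polynomial.aeval_algHom_apply (MulSemiringAction.toAlgHom R A (ConjAct.toConjAct v)) x f

end PolynomialEquation

/-- The truncated exponential polynomial `∑_{i < d} tⁱ / i!`. Division by `i!` is encoded by
`Ring.inverse`, so the coefficients are meaningful when `(d - 1)!` is a unit of `R`. -/
noncomputable def truncatedExp (R : Type*) [CommRing R] (d : ℕ) : R[X] :=
  ∑ i ∈ Finset.range d, Polynomial.monomial i (Ring.inverse (i ! : R))

namespace truncatedExp

variable {R : Type*} [CommRing R] {A : Type*} [Ring A] [Algebra R A] {d : ℕ}

theorem coeff_eq (d m : ℕ) :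
    (truncatedExp R d).coeff m = if m < d then Ring.inverse (m ! : R) else 0 := by
  simp [truncatedExp, Polynomial.finsetSum_coeff, Polynomial.coeff_monomial]

theorem aeval_eq_sum (d : ℕ) (x : A) :
    Polynomial.aeval x (truncatedExp R d) =
      ∑ i ∈ Finset.range d, Ring.inverse (i ! : R) • x ^ i := by
  simp [truncatedExp, Polynomial.aeval_monomial, Algebra.smul_def]

theorem aeval_zero (hd : 0 < d) : Polynomial.aeval (0 : A) (truncatedExp R d) = 1 := by
  simp [← Polynomial.coeff_zero_eq_aeval_zero', coeff_eq, hd]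

theorem inverse_factorial_smul_add_pow {m : ℕ} (hm : IsUnit (m ! : R)) {x y : A}
    (hxy : Commute x y) :
    Ring.inverse (m ! : R) • (x + y) ^ m = ∑ ij ∈ Finset.HasAntidiagonal.antidiagonal m,
      (Ring.inverse (ij.1 ! : R) • x ^ ij.1) * (Ring.inverse (ij.2 ! : R) • y ^ ij.2) := by
  rw [hxy.add_pow', Finset.smul_sum]
  refine Finset.sum_congr rfl fun ij hij ↦ ?_
  rw [← Nat.cast_smul_eq_nsmul R, smul_smul, smul_mul_smul_comm, Nat.castChoose_eq hm hij,
    ← mul_assoc, Ring.inverse_mul_cancel_left _ _ hm]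

theorem aeval_add (hd : IsUnit ((d - 1)! : R)) {x y : A} (hxy : Commute x y)
    (hmul : ∀ i j, d ≤ i + j → x ^ i * y ^ j = 0) :
    Polynomial.aeval (x + y) (truncatedExp R d) =
      Polynomial.aeval x (truncatedExp R d) * Polynomial.aeval y (truncatedExp R d) := by
  let f (i j : ℕ) : A := (Ring.inverse (i ! : R) • x ^ i) * (Ring.inverse (j ! : R) • y ^ j)
  have hf {i j : ℕ} (hij : d ≤ i + j) : f i j = 0 := by
    simp only [f, smul_mul_smul_comm, hmul i j hij, smul_zero]
  calc
    Polynomial.aeval (x + y) (truncatedExp R d)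
    _ = ∑ m ∈ Finset.range d, ∑ i ∈ Finset.range (m + 1), f i (m - i) := by
      rw [aeval_eq_sum]
      refine Finset.sum_congr rfl fun m hm ↦ ?_
      rw [inverse_factorial_smul_add_pow
        (hd.natCast_factorial_of_lt (Finset.mem_range.mp hm)) hxy,
        Finset.Nat.sum_antidiagonal_eq_sum_range_succ f]
    _ = ∑ i ∈ Finset.range d, ∑ j ∈ Finset.range (d - i), f i j := Finset.sum_range_diag_flip d f
    _ = ∑ i ∈ Finset.range d, ∑ j ∈ Finset.range d, f i j := by
      refine Finset.sum_congr rfl fun i _ ↦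
        Finset.sum_subset (Finset.range_mono (d.sub_le i)) fun j _ hj ↦ hf ?_
      rw [Finset.mem_range] at hj
      omega
    _ = Polynomial.aeval x (truncatedExp R d) * Polynomial.aeval y (truncatedExp R d) := by
      simp only [aeval_eq_sum, Finset.sum_mul_sum, f]

theorem exists_pow_eq_zero_and_aeval_eq_one_add (hd : 2 ≤ d) {y : A} (hy : y ^ d = 0) :
    ∃ x : A, x ^ d = 0 ∧ Polynomial.aeval x (truncatedExp R d) = 1 + y := by
  obtain ⟨x, hx, hxy⟩ := exists_pow_eq_zero_and_aeval_eq (R := R) (f := truncatedExp R d - 1)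
    (by simp [coeff_eq, show 0 < d by omega])
    (by simp [coeff_eq, Polynomial.coeff_one, show 1 < d by omega]) hy
  refine ⟨x, hx, ?_⟩
  rw [← hxy, map_sub, map_one, add_sub_cancel]

theorem aeval_mulVec {ι S : Type*} [Fintype ι] [DecidableEq ι] [CommRing S] [Algebra R S]
    (hd : 2 ≤ d) {M : Matrix ι ι S} {v : ι → S} (hv : M *ᵥ M *ᵥ v = 0) :
    Polynomial.aeval M (truncatedExp R d) *ᵥ v = v + M *ᵥ v := by
  obtain ⟨d, rfl⟩ := Nat.exists_eq_add_of_le' hd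
  have hpow (i : ℕ) : M ^ (i + 2) *ᵥ v = 0 := by
    rw [pow_add, sq, ← Matrix.mulVec_mulVec, ← Matrix.mulVec_mulVec, hv, Matrix.mulVec_zero]
  rw [aeval_eq_sum, Matrix.sum_mulVec, Finset.sum_range_succ', Finset.sum_range_succ']
  simp [Matrix.smul_mulVec, hpow, add_comm v]

end truncatedExp

/-- The one-parameter subgroup `s ↦ ∑_{i < d} sⁱ Yⁱ / i!` attached to a matrix `Y` with `Y ^ d = 0`.
The parameter `s` lies in an arbitrary `R`-algebra `S`: `s = X` in `R[X]` gives the matrix of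
polynomials, and evaluation and reduction are base changes of it. -/
noncomputable def expMatrix {R S ι : Type*} [CommRing R] [CommRing S] [Algebra R S] [Fintype ι]
    [DecidableEq ι] (d : ℕ) (Y : Matrix ι ι R) (s : S) : Matrix ι ι S :=
  Polynomial.aeval (s • Y.map (algebraMap R S)) (truncatedExp R d)

namespace expMatrix

variable {R S ι : Type*} [CommRing R] [CommRing S] [Algebra R S] [Fintype ι] [DecidableEq ι]
  {d : ℕ}

theorem map_algHom {T : Type*} [CommRing T] [Algebra R T] (f : S →ₐ[R] T) (d : ℕ)
    (Y : Matrix ι ι R) (s : S) : (expMatrix d Y s).map f = expMatrix d Y (f s) := by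
  rw [expMatrix, expMatrix, ← AlgHom.mapMatrix_apply, ← Polynomial.aeval_algHom_apply]
  congr 2
  ext i j
  simp

theorem eq_aeval_smul (d : ℕ) (Y : Matrix ι ι R) (s : R) :
    expMatrix d Y s = Polynomial.aeval (s • Y) (truncatedExp R d) := by
  simp [expMatrix]

theorem map_eval (d : ℕ) (Y : Matrix ι ι R) (s : R) :
    (expMatrix d Y Polynomial.X).map (Polynomial.eval s) =
      Polynomial.aeval (s • Y) (truncatedExp R d) := by
  rw [← Polynomial.coe_aeval_eq_eval, map_algHom, Polynomial.aeval_X, eq_aeval_smul]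

theorem map_add (hd : IsUnit ((d - 1)! : R)) {Y : Matrix ι ι R} (hY : Y ^ d = 0) (s t : S) :
    expMatrix d Y (s + t) = expMatrix d Y s * expMatrix d Y t := by
  have hYS : Y.map (algebraMap R S) ^ d = 0 := by
    rw [← Matrix.map_pow, hY, Matrix.map_zero _ (map_zero _)]
  rw [expMatrix, add_smul]
  refine truncatedExp.aeval_add hd (((Commute.refl _).smul_left s).smul_right t) fun i j hij ↦ ?_
  rw [smul_pow, smul_pow, smul_mul_smul_comm, ← pow_add, pow_eq_zero_of_le hij hYS, smul_zero]

theorem mulVec_eq (hd : 2 ≤ d) {Y : Matrix ι ι R} {v : ι → S}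
    (hv : Y.map (algebraMap R S) *ᵥ Y.map (algebraMap R S) *ᵥ v = 0) (s : S) :
    expMatrix d Y s *ᵥ v = v + s • Y.map (algebraMap R S) *ᵥ v := by
  rw [expMatrix, truncatedExp.aeval_mulVec hd, Matrix.smul_mulVec]
  simp only [Matrix.smul_mulVec, Matrix.mulVec_smul, hv, smul_zero]

theorem col_map_X {K : Type*} [CommRing K] [Algebra R K] (hd : 2 ≤ d) {Y : Matrix ι ι R} {j : ι}
    (hj : Y.map (algebraMap R K) *ᵥ (Y.map (algebraMap R K)).col j = 0) :
    ((expMatrix d Y Polynomial.X).map (Polynomial.map (algebraMap R K))).col j =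
      Pi.single j 1 + (Polynomial.X : K[X]) • Polynomial.C ∘ (Y.map (algebraMap R K)).col j := by
  have hred : (expMatrix d Y Polynomial.X).map (Polynomial.map (algebraMap R K)) =
      expMatrix d Y (Polynomial.X : K[X]) := by
    simpa using map_algHom (Polynomial.mapAlgHom (Algebra.ofId R K)) d Y Polynomial.X
  have hsq : Y.map (algebraMap R K[X]) *ᵥ Y.map (algebraMap R K[X]) *ᵥ Pi.single j 1 = 0 := by
    have hC : Y.map (algebraMap R K[X]) = (Y.map (algebraMap R K)).map Polynomial.C := rfl
    ext1 i
    have hi := RingHom.map_mulVec Polynomial.C (Y.map (algebraMap R K))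
      ((Y.map (algebraMap R K)).col j) i
    rw [hj, Pi.zero_apply, map_zero] at hi
    rw [Matrix.mulVec_single_one, hC]
    exact hi.symm
  rw [hred, ← Matrix.mulVec_single_one, mulVec_eq hd hsq, Matrix.mulVec_single_one]
  rfl

theorem col_map_X_of_col_eq_zero {K : Type*} [CommRing K] [Algebra R K] (hd : 2 ≤ d)
    {Y : Matrix ι ι R} {a : ι} (ha : (Y.map (algebraMap R K)).col a = 0) :
    ((expMatrix d Y Polynomial.X).map (Polynomial.map (algebraMap R K))).col a =
      Pi.single a 1 := by
  rw [col_map_X hd (by rw [ha, Matrix.mulVec_zero]), ha]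
  ext1 i
  simp

theorem col_map_X_of_col_eq_single {K : Type*} [CommRing K] [Algebra R K] (hd : 2 ≤ d)
    {Y : Matrix ι ι R} {a b : ι} (ha : (Y.map (algebraMap R K)).col a = 0)
    (hb : (Y.map (algebraMap R K)).col b = Pi.single a 1) :
    ((expMatrix d Y Polynomial.X).map (Polynomial.map (algebraMap R K))).col b =
      Pi.single b 1 + Pi.single a Polynomial.X := by
  rw [col_map_X hd (by rw [hb, Matrix.mulVec_single_one, ha]), hb]
  ext1 i
  obtain rfl | hi := eq_or_ne i a <;> simp [*]

end expMatrix

section NilpotentBlock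

variable {ι K : Type*} [Fintype ι] [DecidableEq ι]

theorem two_le_of_pow_eq_zero {M : Type*} [MonoidWithZero M] {a : M} (ha : a ≠ 0) {d : ℕ}
    (hd : a ^ d = 0) : 2 ≤ d := by
  by_contra! h
  exact ha (by simpa using pow_eq_zero_of_le (Nat.le_of_lt_succ h) hd)

theorem exists_pow_succ_ne_zero_and_pow_add_two_eq_zero {M : Type*} [MonoidWithZero M] {a : M}
    (ha : a ≠ 0) (hnil : IsNilpotent a) : ∃ m, a ^ (m + 1) ≠ 0 ∧ a ^ (m + 2) = 0 := by
  obtain ⟨m, hm⟩ := Nat.exists_eq_add_of_le' (two_le_of_pow_eq_zero ha (pow_nilpotencyClass hnil))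
  exact ⟨m, (nilpotencyClass_eq_succ_iff.mp hm).symm⟩

theorem exists_mulVec_ne_zero_and_mulVec_mulVec_eq_zero [Semiring K] {M : Matrix ι ι K}
    (hM : M ≠ 0) (hnil : IsNilpotent M) : ∃ w, M *ᵥ w ≠ 0 ∧ M *ᵥ M *ᵥ w = 0 := by
  obtain ⟨m, hm, hm'⟩ := exists_pow_succ_ne_zero_and_pow_add_two_eq_zero hM hnil
  obtain ⟨x, hx⟩ : ∃ x, M ^ (m + 1) *ᵥ x ≠ 0 := by
    by_contra! h
    exact hm (Matrix.ext_of_mulVec_single fun j ↦ by rw [h, Matrix.zero_mulVec])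
  refine ⟨M ^ m *ᵥ x, ?_, ?_⟩
  · rwa [Matrix.mulVec_mulVec, ← pow_succ']
  · rw [Matrix.mulVec_mulVec x, ← pow_succ', Matrix.mulVec_mulVec, ← pow_succ', hm',
      Matrix.zero_mulVec]

theorem exists_linearEquiv_apply_eq {κ V : Type*} [Finite κ] [Field K] [AddCommGroup V]
    [Module K V] {x y : κ → V} (hx : LinearIndependent K x) (hy : LinearIndependent K y) :
    ∃ g : V ≃ₗ[K] V, ∀ i, g (x i) = y i := by
  have : FiniteDimensional K (Submodule.span K (Set.range x)) :=
    .span_of_finite K (Set.finite_range x)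
  obtain ⟨g, hg⟩ := Submodule.exists_linearEquiv_restrict_eq
    (hx.linearCombinationEquiv.symm ≪≫ₗ hy.linearCombinationEquiv)
  refine ⟨g, fun i ↦ ?_⟩
  have := hg (hx.linearCombinationEquiv (Finsupp.single i 1))
  simpa using this.symm

theorem exists_GL_mulVec_eq {κ : Type*} [Finite κ] [Field K] {x y : κ → ι → K}
    (hx : LinearIndependent K x) (hy : LinearIndependent K y) :
    ∃ g : GL ι K, ∀ i, (g : Matrix ι ι K) *ᵥ x i = y i := by
  obtain ⟨g, hg⟩ := exists_linearEquiv_apply_eq hx hy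
  refine ⟨Matrix.GeneralLinearGroup.toLin.symm (.ofLinearEquiv g), fun i ↦ ?_⟩
  rw [← hg i, ← Matrix.mulVecLin_apply, ← Matrix.GeneralLinearGroup.toLin_apply,
    MulEquiv.apply_symm_apply]
  rfl

theorem exists_GL_conj_col_eq [Field K] {M : Matrix ι ι K} (hM : M ≠ 0) (hnil : IsNilpotent M)
    {a b : ι} (hab : a ≠ b) :
    ∃ g : GL ι K, (g * M * g⁻¹ : Matrix ι ι K).col a = 0 ∧
      (g * M * g⁻¹ : Matrix ι ι K).col b = Pi.single a 1 := by
  obtain ⟨w, hw, hw'⟩ := exists_mulVec_ne_zero_and_mulVec_mulVec_eq_zero hM hnil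
  have hx : LinearIndependent K ![M *ᵥ w, w] := by
    refine (LinearIndependent.pair_iff' hw).mpr fun c hc ↦ hw ?_
    rw [← hc, Matrix.mulVec_smul, hw', smul_zero]
  have hy : LinearIndependent K ![(Pi.single a 1 : ι → K), Pi.single b 1] := by
    refine LinearIndependent.pair_iff.mpr fun r s h ↦ ⟨?_, ?_⟩
    · simpa [hab] using congrFun h a
    · simpa [hab.symm] using congrFun h b
  obtain ⟨g, hg⟩ := exists_GL_mulVec_eq hx hy
  have hga : g *ᵥ M *ᵥ w = Pi.single a 1 := hg 0
  have hgb : g *ᵥ w = Pi.single b 1 := hg 1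
  have hconj (x : ι → K) : (g * M * g⁻¹ : Matrix ι ι K) *ᵥ g *ᵥ x = g *ᵥ M *ᵥ x := by
    rw [Matrix.mulVec_mulVec, Matrix.mulVec_mulVec, mul_assoc, ← Units.val_mul, inv_mul_cancel,
      Units.val_one, mul_one]
  refine ⟨g, ?_, ?_⟩
  · rw [← Matrix.mulVec_single_one, ← hga, hconj, hw', Matrix.mulVec_zero]
  · rw [← Matrix.mulVec_single_one, ← hgb, hconj, hga]

theorem generalLinearGroup_map_surjective {R S : Type*} [CommRing R] [CommRing S]
    {f : R →+* S} [IsLocalHom f] (hf : Function.Surjective f) :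
    Function.Surjective (Matrix.GeneralLinearGroup.map (n := ι) f) := by
  intro g
  obtain ⟨G, hG⟩ : ∃ G : Matrix ι ι R, G.map f = g :=
    ⟨Matrix.of fun i j ↦ Function.surjInv hf (g i j), by ext; simp [Function.surjInv_eq]⟩
  have hdet : IsUnit G.det := by
    rw [← isUnit_map_iff f, RingHom.map_det, RingHom.mapMatrix_apply, hG]
    exact Matrix.isUnits_det_units g
  exact ⟨Matrix.GeneralLinearGroup.mk'' G hdet, Units.ext hG⟩

theorem exists_GL_map_residue_conj_col_eq {R : Type*} [CommRing R] [IsLocalRing R]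
    {Z : Matrix ι ι R} (hZ : Z.map (IsLocalRing.residue R) ≠ 0) (hnil : IsNilpotent Z) {a b : ι}
    (hab : a ≠ b) :
    ∃ v : GL ι R,
      ((v * Z * (v⁻¹ : GL ι R) : Matrix ι ι R).map (IsLocalRing.residue R)).col a = 0 ∧
      ((v * Z * (v⁻¹ : GL ι R) : Matrix ι ι R).map (IsLocalRing.residue R)).col b =
        Pi.single a 1 := by
  obtain ⟨g, hg⟩ := exists_GL_conj_col_eq hZ (hnil.map (IsLocalRing.residue R).mapMatrix) hab
  obtain ⟨v, rfl⟩ := generalLinearGroup_map_surjective IsLocalRing.residue_surjective g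
  refine ⟨v, ?_⟩
  rw [Matrix.map_mul, Matrix.map_mul]
  exact hg

end NilpotentBlock

section DiscreteValuationRing

open IsLocalRing

variable {R : Type*} [CommRing R] [IsDomain R] [IsDiscreteValuationRing R] {ϖ : R}

theorem exists_eq_pow_smul_and_isUnit (hϖ : Irreducible ϖ) {ι : Type*} {a : ι → R}
    (ha : a ≠ 0) : ∃ (e : ℕ) (b : ι → R), a = ϖ ^ e • b ∧ ∃ i, IsUnit (b i) := by
  obtain ⟨i₀, hi₀⟩ := Function.ne_iff.mp ha
  have : Nonempty ι := ⟨i₀⟩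
  let v := IsDiscreteValuationRing.addVal R
  let i := Function.argmin (v ∘ a)
  have hdvd (j : ι) : a i ∣ a j :=
    IsDiscreteValuationRing.addVal_le_iff_dvd.mp (Function.argmin_le (v ∘ a) j)
  have hai : a i ≠ 0 := fun h ↦ hi₀ (zero_dvd_iff.mp (h ▸ hdvd i₀))
  obtain ⟨e, w, hw⟩ := IsDiscreteValuationRing.eq_unit_mul_pow_irreducible hai hϖ
  choose b hb using fun j ↦ (Dvd.intro_left (w : R) hw.symm).trans (hdvd j)
  refine ⟨e, b, funext hb, i, ?_⟩
  rw [hb i, mul_comm] at hw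
  rw [mul_right_cancel₀ (pow_ne_zero e hϖ.ne_zero) hw]
  exact w.isUnit

theorem exists_matrix_eq_pow_smul (hϖ : Irreducible ϖ) {m n : Type*} {A : Matrix m n R}
    (hA : A ≠ 0) : ∃ (e : ℕ) (B : Matrix m n R), A = ϖ ^ e • B ∧ B.map (residue R) ≠ 0 := by
  obtain ⟨e, b, hb, ⟨i, j⟩, hij⟩ := exists_eq_pow_smul_and_isUnit hϖ
    (a := fun q : m × n ↦ A q.1 q.2) (fun h ↦ hA (Matrix.ext fun i j ↦ congrFun h (i, j)))
  refine ⟨e, Matrix.of fun i j ↦ b (i, j), Matrix.ext fun i j ↦ congrFun hb (i, j), fun h ↦ ?_⟩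
  exact (residue_ne_zero_iff_isUnit _).mpr hij (congrFun (congrFun h i) j)

theorem mem_span_C_iff_map_residue_eq_zero (hϖ : Irreducible ϖ) (f : Polynomial R) :
    f ∈ Ideal.span {Polynomial.C ϖ} ↔ f.map (residue R) = 0 := by
  rw [← Polynomial.coe_mapRingHom, ← RingHom.mem_ker, Polynomial.ker_mapRingHom, ker_residue,
    hϖ.maximalIdeal_eq, Ideal.map_span, Set.image_singleton]

theorem exists_aeval_pow_smul_truncatedExp_eq (hϖ : Irreducible ϖ) {ι : Type*} [Fintype ι]
    [DecidableEq ι] {d : ℕ} (hd : 2 ≤ d) {u : Matrix ι ι R} (hu : u ≠ 1) (hud : (u - 1) ^ d = 0) :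
    ∃ (e : ℕ) (Z : Matrix ι ι R), Z ^ d = 0 ∧ Z.map (residue R) ≠ 0 ∧
      Polynomial.aeval (ϖ ^ e • Z) (truncatedExp R d) = u := by
  obtain ⟨x, hx, hxu⟩ := truncatedExp.exists_pow_eq_zero_and_aeval_eq_one_add (R := R) hd hud
  rw [add_sub_cancel] at hxu
  have hx₀ : x ≠ 0 := by
    rintro rfl
    exact hu (hxu.symm.trans (truncatedExp.aeval_zero (by omega)))
  obtain ⟨e, Z, rfl, hZ⟩ := exists_matrix_eq_pow_smul hϖ hx₀
  rw [smul_pow] at hx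
  have hϖe : (ϖ ^ e) ^ d ≠ 0 := pow_ne_zero d (pow_ne_zero e hϖ.ne_zero)
  exact ⟨e, Z, (smul_eq_zero.mp hx).resolve_left hϖe, hZ, hxu⟩

theorem exists_aeval_pow_smul_truncatedExp_eq_conj (hϖ : Irreducible ϖ) {ι : Type*} [Fintype ι]
    [DecidableEq ι] {d : ℕ} (hd : 2 ≤ d) {u : Matrix ι ι R} (hu : u ≠ 1) (hud : (u - 1) ^ d = 0)
    {a b : ι} (hab : a ≠ b) :
    ∃ (e : ℕ) (v : GL ι R) (Y : Matrix ι ι R), Y ^ d = 0 ∧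
      Polynomial.aeval (ϖ ^ e • Y) (truncatedExp R d) = v * u * (v⁻¹ : GL ι R) ∧
      (Y.map (residue R)).col a = 0 ∧ (Y.map (residue R)).col b = Pi.single a 1 := by
  obtain ⟨e, Z, hZd, hZ, hu⟩ := exists_aeval_pow_smul_truncatedExp_eq hϖ hd hu hud
  obtain ⟨v, hv⟩ := exists_GL_map_residue_conj_col_eq hZ ⟨d, hZd⟩ hab
  refine ⟨e, v, v * Z * (v⁻¹ : GL ι R), ?_, ?_, hv⟩
  · rw [Units.conj_pow, hZd, mul_zero, zero_mul]
  · rw [← smul_mul_assoc, ← mul_smul_comm, aeval_units_conj, hu]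

theorem unipotent_one_parameter_subgroup_general (hϖ : Irreducible ϖ) {ι : Type*} [Fintype ι]
    [DecidableEq ι] {d : ℕ} (hd : IsUnit ((d - 1)! : R)) {u : Matrix ι ι R} (hu : u ≠ 1)
    (hud : (u - 1) ^ d = 0) {a b : ι} (hab : a ≠ b) :
    ∃ (e : ℕ) (v : (Matrix ι ι R)ˣ) (E : Matrix ι ι R[X]),
      E.map (Polynomial.eval 0) = 1 ∧
      E.map (Polynomial.aeval (X 0 + X 1 : MvPolynomial (Fin 2) R)) =
        E.map (Polynomial.aeval (X 0 : MvPolynomial (Fin 2) R)) *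
          E.map (Polynomial.aeval (X 1 : MvPolynomial (Fin 2) R)) ∧
      E.map (Polynomial.eval (ϖ ^ e)) =
        (v : Matrix ι ι R) * u * ((v⁻¹ : (Matrix ι ι R)ˣ) : Matrix ι ι R) ∧
      E a a - 1 ∈ Ideal.span {Polynomial.C ϖ} ∧
      E b b - 1 ∈ Ideal.span {Polynomial.C ϖ} ∧
      E b a ∈ Ideal.span {Polynomial.C ϖ} ∧
      E a b - Polynomial.X ∈ Ideal.span {Polynomial.C ϖ} ∧
      ∀ i, i ≠ a → i ≠ b →
        E i a ∈ Ideal.span {Polynomial.C ϖ} ∧ E i b ∈ Ideal.span {Polynomial.C ϖ} := by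
  have hd₂ : 2 ≤ d := two_le_of_pow_eq_zero (sub_ne_zero.mpr hu) hud
  obtain ⟨e, v, Y, hY, hYu, ha, hb⟩ :=
    exists_aeval_pow_smul_truncatedExp_eq_conj hϖ hd₂ hu hud hab
  have hEa := congrFun (expMatrix.col_map_X_of_col_eq_zero (K := ResidueField R) hd₂ ha)
  have hEb := congrFun (expMatrix.col_map_X_of_col_eq_single (K := ResidueField R) hd₂ ha hb)
  refine ⟨e, v, expMatrix d Y Polynomial.X, ?_, ?_, ?_, ?_⟩
  · rw [expMatrix.map_eval, zero_smul, truncatedExp.aeval_zero (by omega)]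
  · simp only [expMatrix.map_algHom, Polynomial.aeval_X, expMatrix.map_add hd hY]
  · rw [expMatrix.map_eval, hYu]
  simp only [Matrix.col_apply, Matrix.map_apply, Pi.add_apply, ResidueField.algebraMap_eq]
    at hEa hEb
  simp only [mem_span_C_iff_map_residue_eq_zero hϖ, Polynomial.map_sub, Polynomial.map_one,
    Polynomial.map_X, hEa, hEb]
  simp +contextual [hab, hab.symm]

end DiscreteValuationRing

theorem isUnit_natCast_factorial_wittVector {p : ℕ} [Fact p.Prime] {k : Type*} [Field k] [CharP k p]
    {n : ℕ} (hn : n < p) : IsUnit (n ! : WittVector p k) := by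
  refine WittVector.isUnit_of_coeff_zero_ne_zero _ ?_
  have hcoeff : (n ! : WittVector p k).coeff 0 = n ! := map_natCast WittVector.constantCoeff (n !)
  rw [hcoeff]
  exact ((IsUnit.natCast_factorial_iff_of_charP p).mpr hn).ne_zero

/-- Given a nontrivial unipotent matrix `u` over `R = W(k)` with `(u-1)^p = 0`, there is a
polynomial one-parameter subgroup `E(t)` of `GL_N` over `R` with `E(0) = 1`,
`E(s+t) = E(s)E(t)`, `E(p^e) = v·u·v⁻¹` for some invertible `v`, and
`E ≡ [[1₂ + t·ν₂, *],[0, *]]` mod `p`. -/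
theorem unipotent_one_parameter_subgroup (p : ℕ) [Fact p.Prime]
    (k : Type) [Field k] [IsAlgClosed k] [CharP k p] (N : ℕ) (hN : 2 ≤ N)
    (u : Matrix (Fin N) (Fin N) (WittVector p k)) (hu : u ≠ 1)
    (hup : (u - 1) ^ p = 0) :
    ∃ (e : ℕ) (v : (Matrix (Fin N) (Fin N) (WittVector p k))ˣ)
      (E : Matrix (Fin N) (Fin N) (Polynomial (WittVector p k))),
      -- (i) `E(0) = 1`
      E.map (Polynomial.eval 0) = 1 ∧
      -- (ii) `E(s+t) = E(s)·E(t)` over `R[s,t]`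
      E.map (Polynomial.aeval (X 0 + X 1 : MvPolynomial (Fin 2) (WittVector p k))) =
        E.map (Polynomial.aeval (X 0 : MvPolynomial (Fin 2) (WittVector p k))) *
          E.map (Polynomial.aeval (X 1 : MvPolynomial (Fin 2) (WittVector p k))) ∧
      -- (iii) `E(p^e) = v·u·v⁻¹`
      E.map (Polynomial.eval ((p : WittVector p k) ^ e)) =
        (v : Matrix (Fin N) (Fin N) (WittVector p k)) * u *
          ((v⁻¹ : (Matrix (Fin N) (Fin N) (WittVector p k))ˣ) :
            Matrix (Fin N) (Fin N) (WittVector p k)) ∧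
      -- (iv) `E ≡ [[1₂ + t·ν₂, *],[0, *]]` mod `p`
      E ⟨0, by omega⟩ ⟨0, by omega⟩ - 1 ∈
        Ideal.span {(p : Polynomial (WittVector p k))} ∧
      E ⟨1, by omega⟩ ⟨1, by omega⟩ - 1 ∈
        Ideal.span {(p : Polynomial (WittVector p k))} ∧
      E ⟨1, by omega⟩ ⟨0, by omega⟩ ∈ Ideal.span {(p : Polynomial (WittVector p k))} ∧
      E ⟨0, by omega⟩ ⟨1, by omega⟩ - Polynomial.X ∈
        Ideal.span {(p : Polynomial (WittVector p k))} ∧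
      (∀ i : Fin N, 2 ≤ (i : ℕ) →
        E i ⟨0, by omega⟩ ∈ Ideal.span {(p : Polynomial (WittVector p k))} ∧
        E i ⟨1, by omega⟩ ∈ Ideal.span {(p : Polynomial (WittVector p k))}) := by
  have h := unipotent_one_parameter_subgroup_general (WittVector.irreducible p)
    (isUnit_natCast_factorial_wittVector (Nat.sub_one_lt (Fact.out : p.Prime).ne_zero)) hu hup
    (a := ⟨0, by omega⟩) (b := ⟨1, by omega⟩) (by simp)
  simp only [map_natCast] at h
  obtain ⟨e, v, E, hzero, hadd, heval, h₀₀, h₁₁, h₁₀, h₀₁, hrest⟩ := h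
  exact ⟨e, v, E, hzero, hadd, heval, h₀₀, h₁₁, h₁₀, h₀₁, fun i hi ↦
    hrest i (Fin.ne_of_val_ne (by simp; omega)) (Fin.ne_of_val_ne (by simp; omega))⟩
end
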